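/- arXiv:1506.06308 — 3 statements merged into one kernel-verified Lean document; each statement's English description precedes it below -/
import Mathlib

section
/- There exist constants C > 0 and ω₁ ≥ ω₀ such that for every ω ≥ ω₁ and every t ∈ [0, T], ‖ y(t; ω) − p_{0,0}(t) ‖ ≤ C / ω; that is, as ω → ∞ the solution of the highly oscillatory nonlinear ODE converges uniformly on [0, T] to the solution of the unforced averaged equation, with rate O(ω^{−1}). -/
open MeasureTheory

theorem aux_bdd {d M : ℕ} (b : Fin M → ℝ → Fin d → ℂ) (hb : ∀ m, Continuous (b m))
    (κ : Fin M → ℝ) (hκ : ∀ m, κ m ≠ 0) (T : ℝ) :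
    ∃ A : ℝ, 0 ≤ A ∧ ∀ ω : ℝ, 0 < ω → ∀ t ∈ Set.Icc (0 : ℝ) T,
      ‖∑ m : Fin M, (Complex.exp (Complex.I * (κ m) * ω * t) / (Complex.I * (κ m) * ω)) • b m t‖
        ≤ A / ω := by
  have h : ∀ m, ∃ c : ℝ, ∀ t ∈ Set.Icc (0 : ℝ) T, ‖b m t‖ ≤ c := fun m =>
    isCompact_Icc.exists_bound_of_continuousOn (hb m).continuousOn
  choose c hc using h
  refine ⟨∑ m, |c m| / |κ m|, Finset.sum_nonneg fun m _ => by positivity, ?_⟩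
  intro ω hω t ht
  rw [Finset.sum_div]
  refine norm_sum_le_of_le _ fun m _ => ?_
  have he : ‖Complex.exp (Complex.I * (κ m) * ω * t)‖ = 1 := by
    have : Complex.I * (κ m) * ω * t = ((κ m * ω * t : ℝ) : ℂ) * Complex.I := by
      push_cast; ring
    rw [this, Complex.norm_exp_ofReal_mul_I]
  rw [norm_smul, norm_div, he, norm_mul, norm_mul, Complex.norm_I, Complex.norm_real,
    Complex.norm_real, one_mul, Real.norm_eq_abs, Real.norm_eq_abs, abs_of_pos hω]
  have hk := abs_pos.mpr (hκ m)
  calc 1 / (|κ m| * ω) * ‖b m t‖ ≤ 1 / (|κ m| * ω) * |c m| := by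
        gcongr; exact (hc m t ht).trans (le_abs_self _)
    _ = _ := by field_simp

theorem aux_deriv {d M : ℕ} (κ : Fin M → ℝ) (hκ : ∀ m, κ m ≠ 0)
    (a : Fin M → ℝ → Fin d → ℂ) (ha : ∀ m, ContDiff ℝ 1 (a m)) (ω : ℝ) (hω : 0 < ω) (t : ℝ) :
    HasDerivAt (fun t : ℝ => ∑ m : Fin M,
        (Complex.exp (Complex.I * (κ m) * ω * t) / (Complex.I * (κ m) * ω)) • a m t)
      ((∑ m : Fin M, Complex.exp (Complex.I * (κ m) * ω * t) • a m t) +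
       ∑ m : Fin M,
        (Complex.exp (Complex.I * (κ m) * ω * t) / (Complex.I * (κ m) * ω)) • deriv (a m) t) t := by
  rw [← Finset.sum_add_distrib]
  refine HasDerivAt.fun_sum fun m _ => ?_
  have h1 : HasDerivAt (a m) (deriv (a m) t) t :=
    (((ha m).differentiable one_ne_zero) t).hasDerivAt
  have hc : Complex.I * (κ m) * ω ≠ 0 := by
    have := hκ m
    have := hω.ne'
    simp_all
  have h2 : HasDerivAt (fun t : ℝ => Complex.exp (Complex.I * (κ m) * ω * t) /
      (Complex.I * (κ m) * ω)) (Complex.exp (Complex.I * (κ m) * ω * t)) t := by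
    have h3 : HasDerivAt (fun t : ℝ => Complex.I * (κ m) * ω * (t : ℂ))
        (Complex.I * (κ m) * ω) t := by
      simpa using (Complex.ofRealCLM.hasDerivAt (x := t)).const_mul (Complex.I * (κ m) * ω)
    exact ((h3.cexp).div_const (Complex.I * (κ m) * ω)).congr_deriv
      (mul_div_cancel_right₀ _ hc)
  exact (h2.smul h1).congr_deriv (add_comm _ _)

/-- As `ω → ∞` the solution of the highly oscillatory nonlinear ODE converges, uniformly
on `[0, T]` and with rate `O(ω⁻¹)`, to the solution of the unforced averaged equation. -/
theorem nonlinear_zeroth_order {d M : ℕ} (hd : 1 ≤ d) (hM : 1 ≤ M)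
    (f : (Fin d → ℂ) → (Fin d → ℂ)) (hf : ∀ n : ℕ, ContDiff ℝ (n : ℕ∞) f)
    (κ : Fin M → ℝ) (hκ : ∀ m, κ m ≠ 0)
    (a : Fin M → ℝ → Fin d → ℂ) (ha : ∀ m, ∀ n : ℕ, ContDiff ℝ (n : ℕ∞) (a m))
    (y₀ : Fin d → ℂ) (T : ℝ) (hT : 0 < T)
    (p₀₀ : ℝ → Fin d → ℂ) (hp₀₀0 : p₀₀ 0 = y₀)
    (hp₀₀ : ∀ t ∈ Set.Icc (0 : ℝ) T,
      HasDerivWithinAt p₀₀ (f (p₀₀ t)) (Set.Icc (0 : ℝ) T) t)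
    (ω₀ : ℝ) (hω₀ : 0 < ω₀)
    (y : ℝ → ℝ → Fin d → ℂ)
    (hy0 : ∀ ω : ℝ, ω₀ ≤ ω → y ω 0 = y₀)
    (hy : ∀ ω : ℝ, ω₀ ≤ ω → ∀ t ∈ Set.Icc (0 : ℝ) T,
      HasDerivWithinAt (y ω)
        (f (y ω t) + ∑ m : Fin M, Complex.exp (Complex.I * (κ m) * ω * t) • a m t)
        (Set.Icc (0 : ℝ) T) t) :
    ∃ C > 0, ∃ ω₁ : ℝ, ω₀ ≤ ω₁ ∧ ∀ ω : ℝ, ω₁ ≤ ω → ∀ t ∈ Set.Icc (0 : ℝ) T,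
      ‖y ω t - p₀₀ t‖ ≤ C / ω := by
  have ha1 : ∀ m, ContDiff ℝ 1 (a m) := fun m => by simpa using ha m 1
  have hf1 : ContDiff ℝ 1 f := by simpa using hf 1
  obtain ⟨A, hA0, hA⟩ := aux_bdd a (fun m => (ha1 m).continuous) κ hκ T
  obtain ⟨B, hB0, hB⟩ := aux_bdd (fun m => deriv (a m))
    (fun m => (ha1 m).continuous_deriv le_rfl) κ hκ T
  have hpc : ContinuousOn p₀₀ (Set.Icc 0 T) := fun t ht => (hp₀₀ t ht).continuousWithinAt
  obtain ⟨R, hR⟩ := isCompact_Icc.exists_bound_of_continuousOn hpc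
  obtain ⟨L, hL⟩ := (hf1.locallyLipschitz.locallyLipschitzOn
    (s := Metric.closedBall (0 : Fin d → ℂ) (R + 1))).exists_lipschitzOnWith_of_compact
    (isCompact_closedBall _ _)
  have hL0 : (0 : ℝ) ≤ L := L.2
  set D : ℝ := L * A + B + A + 1 with hD
  have hLA : 0 ≤ L * A := mul_nonneg hL0 hA0
  have hD0 : 0 < D := by positivity
  set C : ℝ := D * Real.exp ((L + 1) * T) + A with hC
  have hC0 : 0 < C := by positivity
  refine ⟨C, hC0, max ω₀ C, le_max_left _ _, ?_⟩
  intro ω hω t ht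
  have hωω₀ : ω₀ ≤ ω := (le_max_left _ _).trans hω
  have hCω : C ≤ ω := (le_max_right _ _).trans hω
  have hωp : 0 < ω := hω₀.trans_le hωω₀
  have hA' := hA ω hωp
  have hB' := hB ω hωp
  have hG' := aux_deriv κ hκ a ha1 ω hωp
  set G : ℝ → Fin d → ℂ := fun t => ∑ m : Fin M,
    (Complex.exp (Complex.I * (κ m) * ω * t) / (Complex.I * (κ m) * ω)) • a m t with hG
  set H : ℝ → Fin d → ℂ := fun t => ∑ m : Fin M,
    (Complex.exp (Complex.I * (κ m) * ω * t) / (Complex.I * (κ m) * ω)) • deriv (a m) t with hH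
  have hA'' : ∀ t ∈ Set.Icc (0 : ℝ) T, ‖G t‖ ≤ A / ω := hA'
  have hB'' : ∀ t ∈ Set.Icc (0 : ℝ) T, ‖H t‖ ≤ B / ω := hB'
  have hder : ∀ s ∈ Set.Icc (0 : ℝ) T, HasDerivWithinAt (fun s => y ω s - G s - p₀₀ s)
      (f (y ω s) - f (p₀₀ s) - H s) (Set.Icc 0 T) s := by
    intro s hs
    refine (((hy ω hωω₀ s hs).sub (hG' s).hasDerivWithinAt).sub (hp₀₀ s hs)).congr_deriv ?_
    change _ - (_ + H s) - _ = _
    abel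
  have hBd : ∀ s ∈ Set.Icc (0 : ℝ) T, D / ω * Real.exp ((L + 1) * s) + A / ω ≤ C / ω := by
    intro s hs
    have : Real.exp ((L + 1) * s) ≤ Real.exp ((L + 1) * T) := by
      gcongr
      exact hs.2
    calc D / ω * Real.exp ((L + 1) * s) + A / ω
        ≤ D / ω * Real.exp ((L + 1) * T) + A / ω := by gcongr
      _ = C / ω := by rw [hC]; ring
  have hyp : ∀ s ∈ Set.Icc (0 : ℝ) T, ‖y ω s - p₀₀ s‖ ≤ ‖y ω s - G s - p₀₀ s‖ + A / ω := by
    intro s hs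
    have : y ω s - p₀₀ s = (y ω s - G s - p₀₀ s) + G s := by abel
    rw [this]
    exact (norm_add_le _ _).trans (by gcongr; exact hA'' s hs)
  have key : ∀ s ∈ Set.Icc (0 : ℝ) T,
      ‖y ω s - G s - p₀₀ s‖ ≤ D / ω * Real.exp ((L + 1) * s) := by
    intro s hs
    refine image_norm_le_of_norm_deriv_right_lt_deriv_boundary
      (f := fun s => y ω s - G s - p₀₀ s)
      (f' := fun s => f (y ω s) - f (p₀₀ s) - H s)
      (B := fun s => D / ω * Real.exp ((L + 1) * s))
      (B' := fun s => D / ω * (Real.exp ((L + 1) * s) * (L + 1)))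
      (fun s hs => (hder s hs).continuousWithinAt) ?_ ?_ ?_ ?_ hs
    · intro x hx
      exact (hder x ⟨hx.1, hx.2.le⟩).mono_of_mem_nhdsWithin (Icc_mem_nhdsGE_of_mem hx)
    · have h0 := hA'' 0 ⟨le_rfl, hT.le⟩
      simp only [hy0 ω hωω₀, hp₀₀0, mul_zero, Real.exp_zero, mul_one]
      have : y₀ - G 0 - y₀ = - G 0 := by abel
      rw [this, norm_neg]
      refine h0.trans ?_
      gcongr
      linarith
    · intro x
      simpa using (((hasDerivAt_id x).const_mul ((L : ℝ) + 1)).exp).const_mul (D / ω)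
    · intro x hx hxe
      have hx' : x ∈ Set.Icc 0 T := ⟨hx.1, hx.2.le⟩
      have h1 := hyp x hx'
      have hone : C / ω ≤ 1 := (div_le_one hωp).mpr hCω
      have hbd := hBd x hx'
      have hdist : ‖y ω x - p₀₀ x‖ ≤ 1 := by linarith
      have hpR := hR x hx'
      have hpm : p₀₀ x ∈ Metric.closedBall (0 : Fin d → ℂ) (R + 1) := by
        rw [mem_closedBall_zero_iff]; linarith
      have hym : y ω x ∈ Metric.closedBall (0 : Fin d → ℂ) (R + 1) := by
        rw [mem_closedBall_zero_iff]
        have := norm_le_insert' (y ω x) (p₀₀ x)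
        linarith
      have hlip := hL.dist_le_mul _ hym _ hpm
      rw [dist_eq_norm, dist_eq_norm] at hlip
      have hHx := hB'' x hx'
      have h2 := norm_sub_le (f (y ω x) - f (p₀₀ x)) (H x)
      have h3 : (L : ℝ) * ‖y ω x - p₀₀ x‖ ≤ L * (D / ω * Real.exp ((L + 1) * x) + A / ω) := by
        gcongr
        linarith
      have h4 : D / ω ≤ D / ω * Real.exp ((L + 1) * x) := by
        apply le_mul_of_one_le_right (by positivity)
        apply Real.one_le_exp
        have := hx.1
        positivity
      have h5 : L * (A / ω) + B / ω < D / ω := by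
        have : L * (A / ω) + B / ω = (L * A + B) / ω := by ring
        rw [this]
        gcongr
        linarith
      nlinarith
  have := hyp t ht
  have := key t ht
  have := hBd t ht
  linarith
end

section
/- There exist constants C > 0 and ω₁ ≥ ω₀ such that for every ω ≥ ω₁ and every t ∈ [0, T], ‖ y(t; ω) − Y₁(t; ω) ‖ ≤ C ω^{−2}; that is, the first-order truncation of the asymptotic expansion approximates the solution of the nonlinear highly oscillatory ODE uniformly on [0, T] with error O(ω^{−2}). -/
open MeasureTheory

set_option maxHeartbeats 2000000 in
lemma core_est {E : Type*} [NormedAddCommGroup E] [NormedSpace ℝ E] [FiniteDimensional ℝ E]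
    (f : E → E) (hf : ContDiff ℝ 2 f) (T : ℝ) (hT : 0 < T)
    (P p : ℝ → E) (y A U V S R Q : ℝ → ℝ → E) (ω₀ B : ℝ) (hω₀ : 0 < ω₀) (hB : 0 ≤ B)
    (hP : ∀ t ∈ Set.Icc (0 : ℝ) T, HasDerivWithinAt P (f (P t)) (Set.Icc (0 : ℝ) T) t)
    (hp : ∀ t ∈ Set.Icc (0 : ℝ) T,
      HasDerivWithinAt p (fderiv ℝ f (P t) (p t)) (Set.Icc (0 : ℝ) T) t)
    (hy : ∀ ω, ω₀ ≤ ω → ∀ t ∈ Set.Icc (0 : ℝ) T,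
      HasDerivWithinAt (y ω) (f (y ω t) + A ω t) (Set.Icc (0 : ℝ) T) t)
    (hU : ∀ ω t, HasDerivAt (U ω) (ω • A ω t + V ω t) t)
    (hS : ∀ ω t, HasDerivAt (S ω) (ω • U ω t + R ω t) t)
    (hR : ∀ ω t, HasDerivAt (R ω) (ω • V ω t + Q ω t) t)
    (bU : ∀ ω, ∀ t ∈ Set.Icc (0 : ℝ) T, ‖U ω t‖ ≤ B)
    (bS : ∀ ω, ∀ t ∈ Set.Icc (0 : ℝ) T, ‖S ω t‖ ≤ B)
    (bR : ∀ ω, ∀ t ∈ Set.Icc (0 : ℝ) T, ‖R ω t‖ ≤ B)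
    (bQ : ∀ ω, ∀ t ∈ Set.Icc (0 : ℝ) T, ‖Q ω t‖ ≤ B)
    (hy0 : ∀ ω, ω₀ ≤ ω → y ω 0 = P 0) (hp0 : ∀ ω, p 0 + U ω 0 = 0) :
    ∃ C > 0, ∃ ω₁ : ℝ, ω₀ ≤ ω₁ ∧ ∀ ω : ℝ, ω₁ ≤ ω → ∀ t ∈ Set.Icc (0 : ℝ) T,
      ‖y ω t - (P t + ω⁻¹ • (p t + U ω t))‖ ≤ C * (ω ^ 2)⁻¹ := by
  have hdf : Differentiable ℝ f := hf.differentiable (by norm_num)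
  have hDf : ContDiff ℝ 1 (fderiv ℝ f) := hf.fderiv_right (by norm_num)
  have hdDf : Differentiable ℝ (fderiv ℝ f) := hDf.differentiable (by norm_num)
  have cD2 : Continuous (fderiv ℝ (fderiv ℝ f)) := hDf.continuous_fderiv (by norm_num)
  have cP : ContinuousOn P (Set.Icc 0 T) := fun t ht => (hP t ht).continuousWithinAt
  have cp : ContinuousOn p (Set.Icc 0 T) := fun t ht => (hp t ht).continuousWithinAt
  have cpt : IsCompact (Set.Icc (0:ℝ) T) := isCompact_Icc
  have h0 : (0:ℝ) ∈ Set.Icc (0:ℝ) T := ⟨le_rfl, hT.le⟩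
  obtain ⟨BP, hBP⟩ := cpt.exists_bound_of_continuousOn cP
  obtain ⟨Bp, hBp⟩ := cpt.exists_bound_of_continuousOn cp
  obtain ⟨L, hL⟩ := cpt.exists_bound_of_continuousOn (hDf.continuous.comp_continuousOn cP)
  obtain ⟨N, hN⟩ := cpt.exists_bound_of_continuousOn
    ((cD2.comp_continuousOn cP).clm_apply (hf.continuous.comp_continuousOn cP))
  simp only [Function.comp] at hL hN
  have BP0 : 0 ≤ BP := (norm_nonneg _).trans (hBP 0 h0)
  have Bp0 : 0 ≤ Bp := (norm_nonneg _).trans (hBp 0 h0)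
  have L0 : 0 ≤ L := (norm_nonneg _).trans (hL 0 h0)
  have N0 : 0 ≤ N := (norm_nonneg _).trans (hN 0 h0)
  set G : ℝ → ℝ → E := fun ω t => fderiv ℝ f (P t) (S ω t) - R ω t with hG
  set CG := L * B + B with hCG
  have CG0 : 0 ≤ CG := by positivity
  have bG : ∀ ω, ∀ t ∈ Set.Icc (0 : ℝ) T, ‖G ω t‖ ≤ CG := by
    intro ω t ht
    refine (norm_sub_le _ _).trans (add_le_add ?_ (bR ω t ht))
    exact ((fderiv ℝ f (P t)).le_opNorm _).trans
      (mul_le_mul (hL t ht) (bS ω t ht) (norm_nonneg _) L0)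
  set H : ℝ → ℝ → E := fun ω t => fderiv ℝ (fderiv ℝ f) (P t) (f (P t)) (S ω t)
    + fderiv ℝ f (P t) (R ω t) - Q ω t with hH
  set CH := N * B + L * B + B with hCH
  have CH0 : 0 ≤ CH := by positivity
  have bH : ∀ ω, ∀ t ∈ Set.Icc (0 : ℝ) T, ‖H ω t‖ ≤ CH := by
    intro ω t ht
    refine (norm_sub_le _ _).trans (add_le_add ((norm_add_le _ _).trans (add_le_add ?_ ?_)) (bQ ω t ht))
    · exact (ContinuousLinearMap.le_opNorm _ _).trans
        (mul_le_mul (hN t ht) (bS ω t ht) (norm_nonneg _) N0)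
    · exact ((fderiv ℝ f (P t)).le_opNorm _).trans
        (mul_le_mul (hL t ht) (bR ω t ht) (norm_nonneg _) L0)
  set C1 := Bp + B + CG with hC1
  set Rad := BP + C1 + 1 with hRad
  have C10 : 0 ≤ C1 := by positivity
  have Rad0 : 0 ≤ Rad := by positivity
  have cB : IsCompact (Metric.closedBall (0:E) Rad) := isCompact_closedBall 0 Rad
  obtain ⟨K, hK⟩ := cB.exists_bound_of_continuousOn hDf.continuous.continuousOn
  obtain ⟨K2, hK2⟩ := cB.exists_bound_of_continuousOn cD2.continuousOn
  have K0 : 0 ≤ K := (norm_nonneg _).trans (hK 0 (by simpa using Rad0))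
  have K20 : 0 ≤ K2 := (norm_nonneg _).trans (hK2 0 (by simpa using Rad0))
  have cvx : Convex ℝ (Metric.closedBall (0:E) Rad) := convex_closedBall 0 Rad
  have lip : ∀ x ∈ Metric.closedBall (0:E) Rad, ∀ z ∈ Metric.closedBall (0:E) Rad,
      ‖f z - f x‖ ≤ K * ‖z - x‖ := fun x hx z hz =>
    cvx.norm_image_sub_le_of_norm_fderiv_le (fun w _ => hdf w) hK hx hz
  have lip2 : ∀ x ∈ Metric.closedBall (0:E) Rad, ∀ z ∈ Metric.closedBall (0:E) Rad,
      ‖fderiv ℝ f z - fderiv ℝ f x‖ ≤ K2 * ‖z - x‖ := fun x hx z hz =>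
    cvx.norm_image_sub_le_of_norm_fderiv_le (fun w _ => hdDf w) hK2 hx hz
  have tay : ∀ x ∈ Metric.closedBall (0:E) Rad, ∀ z ∈ Metric.closedBall (0:E) Rad,
      ‖f z - f x - fderiv ℝ f x (z - x)‖ ≤ K2 * ‖z - x‖ * ‖z - x‖ := by
    intro x hx z hz
    refine (convex_segment (𝕜 := ℝ) x z).norm_image_sub_le_of_norm_fderiv_le' (fun w _ => hdf w)
      (fun w hw => ?_) (left_mem_segment ℝ x z) (right_mem_segment ℝ x z)
    refine (lip2 x hx w (cvx.segment_subset hx hz hw)).trans ?_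
    gcongr
    rw [segment_eq_image'] at hw
    obtain ⟨θ, ⟨h1, h2⟩, rfl⟩ := hw
    rw [add_sub_cancel_left, norm_smul, Real.norm_of_nonneg h1]
    exact mul_le_of_le_one_left (norm_nonneg _) h2
  -- total residual constant
  set CR := K2 * C1 * C1 + (L * CG + CH) with hCR
  have CR0 : 0 ≤ CR := by positivity
  set D := CR + CG + 1 with hD
  have D0 : 0 < D := by positivity
  set X := Real.exp ((K + 1) * T) with hX
  have X0 : 0 < X := Real.exp_pos _
  refine ⟨D * X + CG, by positivity, max ω₀ (max 1 (D * X)), le_max_left _ _, ?_⟩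
  intro ω hω t ht
  have hω1 : ω₀ ≤ ω := (le_max_left _ _).trans hω
  have hω2 : 1 ≤ ω := ((le_max_left _ _).trans (le_max_right _ _)).trans hω
  have hω3 : D * X ≤ ω := ((le_max_right _ _).trans (le_max_right _ _)).trans hω
  have ωp : 0 < ω := by linarith
  have hω4 : D * X * (ω ^ 2)⁻¹ ≤ 1 := by
    rw [← div_eq_mul_inv, div_le_one (by positivity)]
    nlinarith
  have hinv : (ω ^ 2)⁻¹ ≤ ω⁻¹ := by
    apply inv_anti₀ ωp; nlinarith
  have hinv1 : ω⁻¹ ≤ 1 := inv_le_one_of_one_le₀ hω2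
  set ε := (ω ^ 2)⁻¹ with hε
  have ε0 : 0 < ε := by positivity
  set Z : ℝ → E := fun t => P t + ω⁻¹ • (p t + U ω t) + ε • G ω t with hZ
  have bZ : ∀ t ∈ Set.Icc (0 : ℝ) T, ‖Z t - P t‖ ≤ C1 * ω⁻¹ := by
    intro t ht
    have : Z t - P t = ω⁻¹ • (p t + U ω t) + ε • G ω t := by simp only [hZ]; abel
    rw [this]
    refine (norm_add_le _ _).trans ?_
    rw [norm_smul, norm_smul, Real.norm_of_nonneg ε0.le, Real.norm_of_nonneg (inv_nonneg.2 ωp.le)]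
    have h1 : ‖p t + U ω t‖ ≤ Bp + B := (norm_add_le _ _).trans (add_le_add (hBp t ht) (bU ω t ht))
    have h2 : ω⁻¹ * ‖p t + U ω t‖ ≤ ω⁻¹ * (Bp + B) := by gcongr
    have h3 : ε * ‖G ω t‖ ≤ ω⁻¹ * CG := mul_le_mul hinv (bG ω t ht) (norm_nonneg _) (by positivity)
    rw [hC1]; linarith
  have hZd : ∀ t ∈ Set.Icc (0 : ℝ) T, HasDerivWithinAt Z
      (f (P t) + fderiv ℝ f (P t) (Z t - P t) + A ω t + ε • (H ω t - fderiv ℝ f (P t) (G ω t)))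
      (Set.Icc 0 T) t := by
    intro t ht
    have e1 : HasDerivWithinAt (fun t => fderiv ℝ f (P t))
        (fderiv ℝ (fderiv ℝ f) (P t) (f (P t))) (Set.Icc 0 T) t :=
      (hdDf (P t)).hasFDerivAt.comp_hasDerivWithinAt t (hP t ht)
    have e2 := (e1.clm_apply (hS ω t).hasDerivWithinAt).sub (hR ω t).hasDerivWithinAt
    have e3 := ((hP t ht).add (((hp t ht).add (hU ω t).hasDerivWithinAt).const_smul ω⁻¹)).add
      (e2.const_smul ε)
    refine e3.congr_deriv ?_
    have q1 : ω⁻¹ • ω • A ω t = A ω t := by rw [smul_smul, inv_mul_cancel₀ ωp.ne', one_smul]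
    have q2 : ε * ω = ω⁻¹ := by rw [hε]; field_simp
    simp only [hZ, hH, hG, map_add, map_sub, map_smul, smul_add, smul_sub, smul_smul, q2,
      add_sub_cancel_left, add_sub_assoc]
    simp only [inv_mul_cancel₀ ωp.ne', one_smul]
    abel
  have hres : ∀ t ∈ Set.Icc (0 : ℝ) T, ‖f (P t) + fderiv ℝ f (P t) (Z t - P t) - f (Z t)
      + ε • (H ω t - fderiv ℝ f (P t) (G ω t))‖ ≤ CR * ε := by
    intro t ht
    have hPm : P t ∈ Metric.closedBall (0:E) Rad := by
      rw [mem_closedBall_zero_iff]; linarith [hBP t ht]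
    have hb := bZ t ht
    have hb1 : C1 * ω⁻¹ ≤ C1 := mul_le_of_le_one_right C10 hinv1
    have hZm : Z t ∈ Metric.closedBall (0:E) Rad := by
      rw [mem_closedBall_zero_iff]
      have := norm_add_le (P t) (Z t - P t)
      rw [add_sub_cancel] at this
      linarith [hBP t ht]
    refine (norm_add_le _ _).trans ?_
    have h1 := tay _ hPm _ hZm
    have h2 : ‖f (P t) + fderiv ℝ f (P t) (Z t - P t) - f (Z t)‖ ≤ K2 * C1 * C1 * ε := by
      rw [← norm_neg, show -(f (P t) + fderiv ℝ f (P t) (Z t - P t) - f (Z t))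
        = f (Z t) - f (P t) - fderiv ℝ f (P t) (Z t - P t) by abel]
      calc _ ≤ _ := h1
        _ ≤ K2 * (C1 * ω⁻¹) * (C1 * ω⁻¹) := by gcongr
        _ = _ := by rw [hε, ← inv_pow]; ring
    have h3 : ‖H ω t - fderiv ℝ f (P t) (G ω t)‖ ≤ L * CG + CH := by
      refine (norm_sub_le _ _).trans ?_
      have := ((fderiv ℝ f (P t)).le_opNorm (G ω t)).trans
        (mul_le_mul (hL t ht) (bG ω t ht) (norm_nonneg _) L0)
      linarith [bH ω t ht]
    rw [norm_smul, Real.norm_of_nonneg ε0.le]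
    have h4 := mul_le_mul_of_nonneg_left h3 ε0.le
    rw [hCR]; linarith
  have hmain : ∀ ⦃t⦄, t ∈ Set.Icc (0 : ℝ) T →
      ‖(fun t => y ω t - Z t) t‖ ≤ D * ε * Real.exp ((K + 1) * t) := by
    have hd : ∀ t ∈ Set.Icc (0 : ℝ) T, HasDerivWithinAt (fun t => y ω t - Z t) _ (Set.Icc 0 T) t :=
      fun t ht => (hy ω hω1 t ht).sub (hZd t ht)
    refine image_norm_le_of_norm_deriv_right_lt_deriv_boundary
      (B' := fun t => D * ε * (Real.exp ((K + 1) * t) * (K + 1)))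
      (fun t ht => (hd t ht).continuousWithinAt)
      (fun t ht => (hd t (Set.Ico_subset_Icc_self ht)).mono_of_mem_nhdsWithin
        (Icc_mem_nhdsGE_of_mem ht)) ?_ ?_ ?_
    · have : y ω 0 - Z 0 = - (ε • G ω 0) := by
        simp only [hZ]; rw [hy0 ω hω1, hp0 ω]; simp
      show ‖y ω 0 - Z 0‖ ≤ _
      rw [this, norm_neg, norm_smul, Real.norm_of_nonneg ε0.le, mul_zero, Real.exp_zero, mul_one,
        mul_comm]
      have := bG ω 0 h0
      have : ‖G ω 0‖ ≤ D := by linarith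
      gcongr
    · intro t
      have := ((hasDerivAt_id t).const_mul (K + 1)).exp.const_mul (D * ε)
      simpa using this
    · intro t ht heq
      have ht' := Set.Ico_subset_Icc_self ht
      have hle : Real.exp ((K + 1) * t) ≤ X := Real.exp_le_exp.2 (by have := ht'.2; gcongr)
      have hge : 1 ≤ Real.exp ((K + 1) * t) := Real.one_le_exp (by have := ht'.1; positivity)
      have heq' : ‖y ω t - Z t‖ = D * ε * Real.exp ((K + 1) * t) := heq
      have hsm : D * ε * Real.exp ((K + 1) * t) ≤ 1 := by
        refine le_trans ?_ hω4
        have : D * ε * Real.exp ((K + 1) * t) ≤ D * ε * X := by gcongr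
        linarith
      have hb1 : C1 * ω⁻¹ ≤ C1 := mul_le_of_le_one_right C10 hinv1
      have hz : ‖Z t‖ ≤ BP + C1 := by
        have := norm_add_le (P t) (Z t - P t)
        rw [add_sub_cancel] at this
        linarith [hBP t ht', bZ t ht']
      have hZm : Z t ∈ Metric.closedBall (0:E) Rad := by
        rw [mem_closedBall_zero_iff]; linarith
      have hym : y ω t ∈ Metric.closedBall (0:E) Rad := by
        rw [mem_closedBall_zero_iff]
        have := norm_add_le (Z t) (y ω t - Z t)
        rw [add_sub_cancel] at this
        linarith
      have h1 := lip _ hZm _ hym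
      have h2 := hres t ht'
      rw [heq'] at h1
      have h3 := norm_sub_le (f (y ω t) - f (Z t)) (f (P t) + fderiv ℝ f (P t) (Z t - P t) - f (Z t)
        + ε • (H ω t - fderiv ℝ f (P t) (G ω t)))
      have h4 : CR * ε < D * ε * Real.exp ((K + 1) * t) := by
        have : CR * ε < D * ε := by
          apply mul_lt_mul_of_pos_right _ ε0; linarith
        have : D * ε * 1 ≤ D * ε * Real.exp ((K + 1) * t) := by gcongr
        linarith
      refine lt_of_eq_of_lt (congrArg norm ?_) (lt_of_le_of_lt h3 ?_)
      · abel
      · show _ < D * ε * (Real.exp ((K + 1) * t) * (K + 1))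
        linarith
  have hm : ‖y ω t - Z t‖ ≤ D * ε * Real.exp ((K + 1) * t) := hmain ht
  have hle : Real.exp ((K + 1) * t) ≤ X := Real.exp_le_exp.2 (by have := ht.2; gcongr)
  have h5 : D * ε * Real.exp ((K + 1) * t) ≤ D * ε * X := by gcongr
  have h6 : y ω t - (P t + ω⁻¹ • (p t + U ω t)) = (y ω t - Z t) + ε • G ω t := by
    simp only [hZ]; abel
  rw [h6]
  refine (norm_add_le _ _).trans ?_
  rw [norm_smul, Real.norm_of_nonneg ε0.le]
  have h7 : ε * ‖G ω t‖ ≤ ε * CG := by gcongr; exact bG ω t ht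
  linarith

/-- Oscillatory sums. -/
noncomputable def oscSum {d M : ℕ} (κ : Fin M → ℝ) (b : Fin M → ℝ → Fin d → ℂ) (ω t : ℝ) :
    Fin d → ℂ :=
  ∑ m : Fin M, Complex.exp (Complex.I * (κ m) * ω * t) • b m t

lemma oscSum_deriv {d M : ℕ} (κ : Fin M → ℝ) (b b' c : Fin M → ℝ → Fin d → ℂ)
    (hb : ∀ m t, HasDerivAt (b m) (b' m t) t)
    (hc : ∀ m t, (Complex.I * (κ m)) • b m t = c m t) (ω t : ℝ) :
    HasDerivAt (oscSum κ b ω) (ω • oscSum κ c ω t + oscSum κ b' ω t) t := by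
  unfold oscSum
  have h : ∀ m ∈ Finset.univ, HasDerivAt
      (fun t : ℝ => Complex.exp (Complex.I * (κ m) * ω * t) • b m t)
      (Complex.exp (Complex.I * (κ m) * ω * t) • b' m t +
        (Complex.exp (Complex.I * (κ m) * ω * t) * (Complex.I * (κ m) * ω)) • b m t) t := by
    intro m _
    have h1 : HasDerivAt (fun t : ℝ => Complex.exp (Complex.I * (κ m) * ω * t))
        (Complex.exp (Complex.I * (κ m) * ω * t) * (Complex.I * (κ m) * ω)) t := by
      have := ((Complex.ofRealCLM.hasDerivAt (x := t)).const_mul (Complex.I * (κ m) * ω)).cexp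
      simpa using this
    exact h1.smul (hb m t)
  have := HasDerivAt.fun_sum h
  refine this.congr_deriv ?_
  rw [Finset.smul_sum, ← Finset.sum_add_distrib]
  refine Finset.sum_congr rfl fun m _ => ?_
  rw [← hc m t, add_comm]
  congr 1
  ext i
  simp only [Pi.smul_apply, smul_eq_mul, Complex.real_smul]
  ring

lemma oscSum_bound {d M : ℕ} (κ : Fin M → ℝ) (b : Fin M → ℝ → Fin d → ℂ)
    (hb : ∀ m, Continuous (b m)) (T : ℝ) :
    ∃ B, 0 ≤ B ∧ ∀ ω, ∀ t ∈ Set.Icc (0 : ℝ) T, ‖oscSum κ b ω t‖ ≤ B := by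
  have : ContinuousOn (fun t => ∑ m, ‖b m t‖) (Set.Icc 0 T) := by fun_prop
  obtain ⟨B, hB⟩ := (isCompact_Icc).exists_bound_of_continuousOn this
  refine ⟨max B 0, le_max_right _ _, fun ω t ht => ?_⟩
  refine le_trans ?_ (((Real.le_norm_self _).trans (hB t ht)).trans (le_max_left _ _))
  refine (norm_sum_le _ _).trans (Finset.sum_le_sum fun m _ => ?_)
  rw [norm_smul, Complex.norm_exp]
  simp

/-- The first-order truncation `Y₁(t; ω)` of the asymptotic expansion approximates the
solution of the nonlinear highly oscillatory ODE uniformly on `[0, T]` with error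
`O(ω⁻²)`. Here `p_{1,m}(t) = aₘ(t)/(i κₘ)` and `p_{1,0}` solves the variational
equation `p' = Df(p₀₀) p` with `p_{1,0}(0) = − Σₘ p_{1,m}(0)`. -/
theorem nonlinear_first_order_error {d M : ℕ} (hd : 1 ≤ d) (hM : 1 ≤ M)
    (f : (Fin d → ℂ) → (Fin d → ℂ)) (hf : ∀ n : ℕ, ContDiff ℝ (n : ℕ∞) f)
    (κ : Fin M → ℝ) (hκ : ∀ m, κ m ≠ 0)
    (a : Fin M → ℝ → Fin d → ℂ) (ha : ∀ m, ∀ n : ℕ, ContDiff ℝ (n : ℕ∞) (a m))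
    (y₀ : Fin d → ℂ) (T : ℝ) (hT : 0 < T)
    (p₀₀ : ℝ → Fin d → ℂ) (hp₀₀0 : p₀₀ 0 = y₀)
    (hp₀₀ : ∀ t ∈ Set.Icc (0 : ℝ) T,
      HasDerivWithinAt p₀₀ (f (p₀₀ t)) (Set.Icc (0 : ℝ) T) t)
    (ω₀ : ℝ) (hω₀ : 0 < ω₀)
    (y : ℝ → ℝ → Fin d → ℂ)
    (hy0 : ∀ ω : ℝ, ω₀ ≤ ω → y ω 0 = y₀)
    (hy : ∀ ω : ℝ, ω₀ ≤ ω → ∀ t ∈ Set.Icc (0 : ℝ) T,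
      HasDerivWithinAt (y ω)
        (f (y ω t) + ∑ m : Fin M, Complex.exp (Complex.I * (κ m) * ω * t) • a m t)
        (Set.Icc (0 : ℝ) T) t)
    (p₁ : Fin M → ℝ → Fin d → ℂ)
    (hp₁ : ∀ m, ∀ t : ℝ, p₁ m t = (Complex.I * (κ m))⁻¹ • a m t)
    (p₁₀ : ℝ → Fin d → ℂ)
    (hp₁₀0 : p₁₀ 0 = - ∑ m : Fin M, p₁ m 0)
    (hp₁₀ : ∀ t ∈ Set.Icc (0 : ℝ) T,
      HasDerivWithinAt p₁₀ (fderiv ℝ f (p₀₀ t) (p₁₀ t)) (Set.Icc (0 : ℝ) T) t)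
    (Y₁ : ℝ → ℝ → Fin d → ℂ)
    (hY₁ : ∀ ω t : ℝ, Y₁ ω t = p₀₀ t + (ω⁻¹ : ℝ) •
      (p₁₀ t + ∑ m : Fin M, Complex.exp (Complex.I * (κ m) * ω * t) • p₁ m t)) :
    ∃ C > 0, ∃ ω₁ : ℝ, ω₀ ≤ ω₁ ∧ ∀ ω : ℝ, ω₁ ≤ ω → ∀ t ∈ Set.Icc (0 : ℝ) T,
      ‖y ω t - Y₁ ω t‖ ≤ C * (ω ^ 2)⁻¹ := by
  have hf2 : ContDiff ℝ 2 f := by exact_mod_cast hf 2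
  have hc : ∀ m, Complex.I * (κ m : ℂ) ≠ 0 := fun m =>
    mul_ne_zero Complex.I_ne_zero (by exact_mod_cast hκ m)
  have ha2 : ∀ m, ContDiff ℝ 2 (a m) := fun m => by exact_mod_cast ha m 2
  have da : ∀ m t, HasDerivAt (a m) (deriv (a m) t) t := fun m t =>
    ((ha2 m).differentiable (by norm_num) t).hasDerivAt
  have ha1 : ∀ m, ContDiff ℝ 1 (deriv (a m)) := fun m => by
    have : ContDiff ℝ (1 + 1) (a m) := by
      have := ha2 m
      norm_num
      exact this
    exact (contDiff_succ_iff_deriv.1 this).2.2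
  have dda : ∀ m t, HasDerivAt (deriv (a m)) (deriv (deriv (a m)) t) t := fun m t =>
    ((ha1 m).differentiable (by norm_num) t).hasDerivAt
  have c0 : ∀ m, Continuous (a m) := fun m => (ha2 m).continuous
  have c1 : ∀ m, Continuous (deriv (a m)) := fun m => (ha1 m).continuous
  have c2 : ∀ m, Continuous (deriv (deriv (a m))) := fun m =>
    (ha1 m).continuous_deriv (by norm_num)
  have ep₁ : p₁ = fun m t => (Complex.I * (κ m : ℂ))⁻¹ • a m t := by
    funext m t; exact hp₁ m t
  set j : Fin M → ℂ := fun m => (Complex.I * (κ m : ℂ))⁻¹ with hj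
  set s : Fin M → ℝ → Fin d → ℂ := fun m t => j m • j m • a m t with hs
  set v : Fin M → ℝ → Fin d → ℂ := fun m t => j m • deriv (a m) t with hv
  set r : Fin M → ℝ → Fin d → ℂ := fun m t => j m • j m • deriv (a m) t with hr
  set q : Fin M → ℝ → Fin d → ℂ := fun m t => j m • j m • deriv (deriv (a m)) t with hq
  have hcj : ∀ m (x : Fin d → ℂ), (Complex.I * (κ m : ℂ)) • j m • x = x := fun m x => by
    rw [hj, smul_inv_smul₀ (hc m)]
  obtain ⟨B1, B10, hB1⟩ := oscSum_bound κ p₁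
    (fun m => by rw [ep₁]; exact (c0 m).const_smul (j m)) T
  obtain ⟨B2, B20, hB2⟩ := oscSum_bound κ s
    (fun m => ((c0 m).const_smul (j m)).const_smul (j m)) T
  obtain ⟨B3, B30, hB3⟩ := oscSum_bound κ r
    (fun m => ((c1 m).const_smul (j m)).const_smul (j m)) T
  obtain ⟨B4, B40, hB4⟩ := oscSum_bound κ q
    (fun m => ((c2 m).const_smul (j m)).const_smul (j m)) T
  have main := core_est f hf2 T hT p₀₀ p₁₀ y (oscSum κ a) (oscSum κ p₁) (oscSum κ v)
    (oscSum κ s) (oscSum κ r) (oscSum κ q) ω₀ (B1 + B2 + B3 + B4) hω₀ (by positivity)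
    hp₀₀ hp₁₀ hy
    (oscSum_deriv κ p₁ v a
      (fun m t => by rw [ep₁]; exact (da m t).const_smul (j m))
      (fun m t => by rw [ep₁]; exact hcj m _))
    (oscSum_deriv κ s r p₁
      (fun m t => ((da m t).const_smul (j m)).const_smul (j m))
      (fun m t => by rw [ep₁]; exact hcj m _))
    (oscSum_deriv κ r q v
      (fun m t => ((dda m t).const_smul (j m)).const_smul (j m))
      (fun m t => hcj m _))
    (fun ω t ht => by linarith [hB1 ω t ht]) (fun ω t ht => by linarith [hB2 ω t ht])
    (fun ω t ht => by linarith [hB3 ω t ht]) (fun ω t ht => by linarith [hB4 ω t ht])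
    (fun ω hω => by rw [hy0 ω hω, hp₀₀0])
    (fun ω => by rw [hp₁₀0]; simp [oscSum])
  obtain ⟨C, hC, ω₁, hω₁, h⟩ := main
  refine ⟨C, hC, ω₁, hω₁, fun ω hω t ht => ?_⟩
  rw [hY₁]
  exact h ω hω t ht
end

section
/- There exist constants C > 0 and ω₁ ≥ ω₀ such that for every ω ≥ ω₁ and every t ∈ [0, T], the defect of the first-order truncated expansion satisfies ‖ (∂/∂t) Y₁(t; ω) − f(Y₁(t; ω)) − Σ_{m=1}^{M} a_m(t) e^{i κ_m ω t} ‖ ≤ C / ω, and moreover Y₁(0; ω) = y₀ for every ω. -/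
open MeasureTheory

/-- The defect of the first-order truncated expansion `Y₁` in the nonlinear highly
oscillatory ODE is `O(ω⁻¹)` uniformly on `[0, T]`, and `Y₁(0; ω) = y₀`. -/
theorem nonlinear_first_order_defect {d M : ℕ} (hd : 1 ≤ d) (hM : 1 ≤ M)
    (f : (Fin d → ℂ) → (Fin d → ℂ)) (hf : ∀ n : ℕ, ContDiff ℝ (n : ℕ∞) f)
    (κ : Fin M → ℝ) (hκ : ∀ m, κ m ≠ 0)
    (a : Fin M → ℝ → Fin d → ℂ) (ha : ∀ m, ∀ n : ℕ, ContDiff ℝ (n : ℕ∞) (a m))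
    (y₀ : Fin d → ℂ) (T : ℝ) (hT : 0 < T)
    (p₀₀ : ℝ → Fin d → ℂ) (hp₀₀0 : p₀₀ 0 = y₀)
    (hp₀₀ : ∀ t ∈ Set.Icc (0 : ℝ) T,
      HasDerivWithinAt p₀₀ (f (p₀₀ t)) (Set.Icc (0 : ℝ) T) t)
    (ω₀ : ℝ) (hω₀ : 0 < ω₀)
    (p₁ : Fin M → ℝ → Fin d → ℂ)
    (hp₁ : ∀ m, ∀ t : ℝ, p₁ m t = (Complex.I * (κ m))⁻¹ • a m t)
    (p₁₀ : ℝ → Fin d → ℂ)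
    (hp₁₀0 : p₁₀ 0 = - ∑ m : Fin M, p₁ m 0)
    (hp₁₀ : ∀ t ∈ Set.Icc (0 : ℝ) T,
      HasDerivWithinAt p₁₀ (fderiv ℝ f (p₀₀ t) (p₁₀ t)) (Set.Icc (0 : ℝ) T) t)
    (Y₁ : ℝ → ℝ → Fin d → ℂ)
    (hY₁ : ∀ ω t : ℝ, Y₁ ω t = p₀₀ t + (ω⁻¹ : ℝ) •
      (p₁₀ t + ∑ m : Fin M, Complex.exp (Complex.I * (κ m) * ω * t) • p₁ m t)) :
    (∃ C > 0, ∃ ω₁ : ℝ, ω₀ ≤ ω₁ ∧ ∀ ω : ℝ, ω₁ ≤ ω → ∀ t ∈ Set.Icc (0 : ℝ) T,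
      ‖derivWithin (Y₁ ω) (Set.Icc (0 : ℝ) T) t - f (Y₁ ω t)
          - ∑ m : Fin M, Complex.exp (Complex.I * (κ m) * ω * t) • a m t‖ ≤ C / ω) ∧
    ∀ ω : ℝ, Y₁ ω 0 = y₀ := by
  have hIc : IsCompact (Set.Icc (0 : ℝ) T) := isCompact_Icc
  have hf1 : ContDiff ℝ 1 f := by simpa using hf 1
  have ha1 : ∀ m, ContDiff ℝ 1 (a m) := fun m => by simpa using ha m 1
  have hexp : ∀ (m : Fin M) (ω t : ℝ), ‖Complex.exp (Complex.I * (κ m) * ω * t)‖ = 1 := by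
    intro m ω t
    have : Complex.I * (κ m) * ω * t = ((κ m * ω * t : ℝ) : ℂ) * Complex.I := by
      push_cast; ring
    rw [this, Complex.norm_exp_ofReal_mul_I]
  constructor
  swap
  · intro ω
    rw [hY₁, hp₁₀0, hp₀₀0]
    simp
  have hc0 : ContinuousOn p₀₀ (Set.Icc 0 T) := fun t ht => (hp₀₀ t ht).continuousWithinAt
  have hc1 : ContinuousOn p₁₀ (Set.Icc 0 T) := fun t ht => (hp₁₀ t ht).continuousWithinAt
  obtain ⟨R, hR⟩ := hIc.exists_bound_of_continuousOn hc0
  obtain ⟨B, hB⟩ := hIc.exists_bound_of_continuousOn hc1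
  have hcp : ∀ m, Continuous (p₁ m) := by
    intro m
    have : p₁ m = fun t => (Complex.I * (κ m))⁻¹ • a m t := funext (hp₁ m)
    rw [this]
    exact (ha1 m).continuous.const_smul ((Complex.I * (κ m))⁻¹ : ℂ)
  have hcg : ∀ m, Continuous (fun t => (Complex.I * (κ m))⁻¹ • deriv (a m) t) := by
    intro m
    exact ((ha1 m).continuous_deriv le_rfl).const_smul ((Complex.I * (κ m))⁻¹ : ℂ)
  choose P hP using fun m => hIc.exists_bound_of_continuousOn (hcp m).continuousOn
  choose G hG using fun m => hIc.exists_bound_of_continuousOn (hcg m).continuousOn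
  have h0 : (0 : ℝ) ∈ Set.Icc (0 : ℝ) T := ⟨le_rfl, hT.le⟩
  have hB0 : 0 ≤ B := (norm_nonneg _).trans (hB 0 h0)
  have hP0 : 0 ≤ ∑ m, P m :=
    Finset.sum_nonneg fun m _ => (norm_nonneg _).trans (hP m 0 h0)
  have hG0 : 0 ≤ ∑ m, G m :=
    Finset.sum_nonneg fun m _ => (norm_nonneg _).trans (hG m 0 h0)
  set Q : ℝ := B + ∑ m, P m with hQ
  have hQ0 : 0 ≤ Q := by positivity
  obtain ⟨L, hL⟩ := (isCompact_closedBall (0 : Fin d → ℂ) (R + Q)).exists_bound_of_continuousOn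
    (hf1.continuous_fderiv one_ne_zero).continuousOn
  have hL0 : 0 ≤ L := (norm_nonneg _).trans (hL (p₀₀ 0) (by
    have := hR 0 h0
    simp only [mem_closedBall_zero_iff]; linarith))
  refine ⟨L * Q + (L * B + ∑ m, G m) + 1, by positivity, max ω₀ 1, le_max_left _ _, ?_⟩
  intro ω hω t ht
  have hω1 : 1 ≤ ω := (le_max_right _ _).trans hω
  have hωp : 0 < ω := by linarith
  have hder : HasDerivWithinAt (Y₁ ω) (f (p₀₀ t) + (ω⁻¹ : ℝ) • (fderiv ℝ f (p₀₀ t) (p₁₀ t) +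
      ∑ m : Fin M, (Complex.exp (Complex.I * (κ m) * ω * t) •
          ((Complex.I * (κ m))⁻¹ • deriv (a m) t) +
        (Complex.exp (Complex.I * (κ m) * ω * t) * (Complex.I * (κ m) * ω)) • p₁ m t)))
      (Set.Icc (0 : ℝ) T) t := by
    have : Y₁ ω = fun t => p₀₀ t + (ω⁻¹ : ℝ) •
      (p₁₀ t + ∑ m : Fin M, Complex.exp (Complex.I * (κ m) * ω * t) • p₁ m t) :=
      funext (hY₁ ω)
    rw [this]
    refine (hp₀₀ t ht).fun_add (((hp₁₀ t ht).fun_add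
      (HasDerivWithinAt.fun_sum fun m _ => ?_)).fun_const_smul _)
    have h1 : HasDerivAt (fun t : ℝ => Complex.exp (Complex.I * (κ m) * ω * t))
        (Complex.exp (Complex.I * (κ m) * ω * t) * (Complex.I * (κ m) * ω)) t := by
      have h := (((hasDerivAt_id (t : ℂ)).const_mul (Complex.I * (κ m) * ω)).cexp).comp_ofReal
      simpa using h
    have h2 : HasDerivAt (p₁ m) ((Complex.I * (κ m))⁻¹ • deriv (a m) t) t := by
      have : p₁ m = fun t => (Complex.I * (κ m))⁻¹ • a m t := funext (hp₁ m)
      rw [this]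
      exact (((ha1 m).differentiable one_ne_zero) t).hasDerivAt.fun_const_smul _
    exact (h1.fun_smul h2).hasDerivWithinAt
  rw [hder.derivWithin ((uniqueDiffOn_Icc hT) t ht)]
  have hsum : (ω⁻¹ : ℝ) • ∑ m : Fin M,
      (Complex.exp (Complex.I * (κ m) * ω * t) * (Complex.I * (κ m) * ω)) • p₁ m t
      = ∑ m : Fin M, Complex.exp (Complex.I * (κ m) * ω * t) • a m t := by
    rw [Finset.smul_sum]
    refine Finset.sum_congr rfl fun m _ => ?_
    rw [hp₁, smul_smul]
    have hk : (κ m : ℂ) ≠ 0 := by exact_mod_cast hκ m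
    have hw : (ω : ℂ) ≠ 0 := by exact_mod_cast hωp.ne'
    ext i
    simp only [Pi.smul_apply, smul_eq_mul, Complex.real_smul, Complex.ofReal_inv]
    field_simp
  have hp0 : p₀₀ t ∈ Metric.closedBall (0 : Fin d → ℂ) (R + Q) := by
    have := hR t ht
    simp only [mem_closedBall_zero_iff]; linarith
  have hdiff : ‖p₀₀ t - Y₁ ω t‖ ≤ Q / ω := by
    rw [hY₁, sub_add_cancel_left, norm_neg, norm_smul, Real.norm_of_nonneg (by positivity),
      div_eq_inv_mul]
    gcongr
    refine (norm_add_le _ _).trans (add_le_add (hB t ht) (norm_sum_le_of_le _ fun m _ => ?_))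
    rw [norm_smul, hexp, one_mul]
    exact hP m t ht
  have hY : Y₁ ω t ∈ Metric.closedBall (0 : Fin d → ℂ) (R + Q) := by
    have h1 := hR t ht
    have h2 : Q / ω ≤ Q := div_le_self hQ0 hω1
    have h3 : ‖Y₁ ω t‖ ≤ ‖p₀₀ t‖ + ‖p₀₀ t - Y₁ ω t‖ := norm_le_norm_add_norm_sub _ _
    simp only [mem_closedBall_zero_iff]; linarith
  have hlip : ‖f (p₀₀ t) - f (Y₁ ω t)‖ ≤ L * ‖p₀₀ t - Y₁ ω t‖ :=
    (convex_closedBall (0 : Fin d → ℂ) (R + Q)).norm_image_sub_le_of_norm_fderiv_le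
      (fun x _ => hf1.differentiable one_ne_zero x) hL hY hp0
  have heq : f (p₀₀ t) + (ω⁻¹ : ℝ) • (fderiv ℝ f (p₀₀ t) (p₁₀ t) +
      ∑ m : Fin M, (Complex.exp (Complex.I * (κ m) * ω * t) •
          ((Complex.I * (κ m))⁻¹ • deriv (a m) t) +
        (Complex.exp (Complex.I * (κ m) * ω * t) * (Complex.I * (κ m) * ω)) • p₁ m t))
      - f (Y₁ ω t) - ∑ m : Fin M, Complex.exp (Complex.I * (κ m) * ω * t) • a m t
      = (f (p₀₀ t) - f (Y₁ ω t)) + (ω⁻¹ : ℝ) • (fderiv ℝ f (p₀₀ t) (p₁₀ t) +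
      ∑ m : Fin M, Complex.exp (Complex.I * (κ m) * ω * t) •
          ((Complex.I * (κ m))⁻¹ • deriv (a m) t)) := by
    rw [← hsum, Finset.sum_add_distrib]
    simp only [smul_add]
    abel
  rw [heq]
  have h2 : ‖(ω⁻¹ : ℝ) • (fderiv ℝ f (p₀₀ t) (p₁₀ t) +
      ∑ m : Fin M, Complex.exp (Complex.I * (κ m) * ω * t) •
          ((Complex.I * (κ m))⁻¹ • deriv (a m) t))‖ ≤ (L * B + ∑ m, G m) / ω := by
    rw [norm_smul, Real.norm_of_nonneg (by positivity), div_eq_inv_mul]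
    gcongr
    refine (norm_add_le _ _).trans (add_le_add ?_ (norm_sum_le_of_le _ fun m _ => ?_))
    · exact (ContinuousLinearMap.le_opNorm _ _).trans
        (mul_le_mul (hL _ hp0) (hB t ht) (norm_nonneg _) hL0)
    · rw [norm_smul, hexp, one_mul]
      exact hG m t ht
  have h3 : L * ‖p₀₀ t - Y₁ ω t‖ ≤ L * (Q / ω) := mul_le_mul_of_nonneg_left hdiff hL0
  have h4 : (L * Q + (L * B + ∑ m, G m) + 1) / ω
      = L * (Q / ω) + (L * B + ∑ m, G m) / ω + 1 / ω := by ring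
  have h5 : 0 < 1 / ω := by positivity
  rw [h4]
  refine (norm_add_le _ _).trans ?_
  linarith
end
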